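/- Let 1 ≤ p ≤ ∞ and let 0 ≤ s ≤ t be real numbers. Then there exists a constant C > 0 such that ‖J_{−s} φ‖_p ≤ C ‖J_{−t} φ‖_p for all φ ∈ 𝒮(ℝⁿ). (Monotonicity of the Bessel-potential seminorms on 𝒟_{L^p}, corresponding to the continuous inclusions of the local Banach spaces.) -/

import Mathlib

open MeasureTheory Complex
open scoped FourierTransform ENNReal SchwartzMap

/-- The Bessel potential `J_z f = 𝓕⁻¹((1+|ξ|²)^(-z/2) · 𝓕 f)` of a function on `ℝⁿ`. -/
noncomputable def besselPotential (n : ℕ) (z : ℂ)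
    (f : EuclideanSpace ℝ (Fin n) → ℂ) : EuclideanSpace ℝ (Fin n) → ℂ :=
  𝓕⁻ (fun ξ => ((1 : ℂ) + (‖ξ‖ : ℂ) ^ 2) ^ (-z / 2) * 𝓕 f ξ)

/-- Averaging the translates of a continuous function against a probability measure does not
increase its `L^p` norm. -/
theorem eLpNorm_integral_translate_le {E : Type*} [NormedAddCommGroup E] [NormedSpace ℝ E]
    [FiniteDimensional ℝ E] [MeasurableSpace E] [BorelSpace E]
    (ν : Measure E) [ν.IsAddHaarMeasure] (μ : Measure E) [IsProbabilityMeasure μ]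
    {f : E → ℂ} (hf : Continuous f) {p : ℝ≥0∞} (hp : 1 ≤ p) :
    eLpNorm (fun x => ∫ y, f (x + y) ∂μ) p ν ≤ eLpNorm f p ν := by
  have hp0 : p ≠ 0 := (zero_lt_one.trans_le hp).ne'
  rcases eq_or_ne p ∞ with rfl | hp_top
  · have hbound : ∀ x, ‖f x‖ₑ ≤ eLpNorm f ∞ ν := by
      have hdense : Dense {x | ‖f x‖ₑ ≤ eLpNorm f ∞ ν} := by
        refine Measure.dense_of_ae (μ := ν) ?_
        simpa only [eLpNorm_exponent_top] using ae_le_eLpNormEssSup (f := f) (μ := ν)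
      have hclosed : IsClosed {x | ‖f x‖ₑ ≤ eLpNorm f ∞ ν} :=
        isClosed_le hf.enorm continuous_const
      intro x
      have hx : x ∈ {x | ‖f x‖ₑ ≤ eLpNorm f ∞ ν} := by
        rw [← hclosed.closure_eq]
        exact hdense x
      exact hx
    rw [eLpNorm_exponent_top]
    refine eLpNormEssSup_le_of_ae_enorm_bound (Filter.Eventually.of_forall fun x => ?_)
    calc ‖∫ y, f (x + y) ∂μ‖ₑ ≤ ∫⁻ y, ‖f (x + y)‖ₑ ∂μ := enorm_integral_le_lintegral_enorm _
      _ ≤ ∫⁻ _, eLpNorm f ∞ ν ∂μ := lintegral_mono fun y => hbound _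
      _ = eLpNorm f ∞ ν := by simp
  · have hr : 0 < p.toReal := ENNReal.toReal_pos hp0 hp_top
    have jensen : ∀ x, ‖∫ y, f (x + y) ∂μ‖ₑ ^ p.toReal ≤ ∫⁻ y, ‖f (x + y)‖ₑ ^ p.toReal ∂μ := by
      intro x
      have hm : AEStronglyMeasurable (fun y => f (x + y)) μ :=
        (by fun_prop : Continuous fun y => f (x + y)).aestronglyMeasurable
      have h1 : ‖∫ y, f (x + y) ∂μ‖ₑ ≤ eLpNorm (fun y => f (x + y)) p μ :=
        (enorm_integral_le_lintegral_enorm _).trans <| by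
          simpa only [eLpNorm_one_eq_lintegral_enorm] using
            eLpNorm_le_eLpNorm_of_exponent_le hp hm
      rw [eLpNorm_eq_lintegral_rpow_enorm_toReal hp0 hp_top] at h1
      calc ‖∫ y, f (x + y) ∂μ‖ₑ ^ p.toReal
          ≤ ((∫⁻ y, ‖f (x + y)‖ₑ ^ p.toReal ∂μ) ^ (1 / p.toReal)) ^ p.toReal := by gcongr
        _ = ∫⁻ y, ‖f (x + y)‖ₑ ^ p.toReal ∂μ := by
          rw [← ENNReal.rpow_mul, one_div_mul_cancel hr.ne', ENNReal.rpow_one]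
    rw [eLpNorm_eq_lintegral_rpow_enorm_toReal hp0 hp_top,
      eLpNorm_eq_lintegral_rpow_enorm_toReal hp0 hp_top]
    refine ENNReal.rpow_le_rpow ?_ (by positivity)
    have hmeas : Measurable fun q : E × E => ‖f (q.1 + q.2)‖ₑ ^ p.toReal :=
      ((by fun_prop : Continuous fun q : E × E => f (q.1 + q.2)).enorm.measurable).pow_const _
    calc ∫⁻ x, ‖∫ y, f (x + y) ∂μ‖ₑ ^ p.toReal ∂ν
        ≤ ∫⁻ x, ∫⁻ y, ‖f (x + y)‖ₑ ^ p.toReal ∂μ ∂ν := lintegral_mono jensen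
      _ = ∫⁻ y, ∫⁻ x, ‖f (x + y)‖ₑ ^ p.toReal ∂ν ∂μ := lintegral_lintegral_swap hmeas.aemeasurable
      _ = ∫⁻ _, ∫⁻ x, ‖f x‖ₑ ^ p.toReal ∂ν ∂μ := by
        refine lintegral_congr fun y => ?_
        exact lintegral_add_right_eq_self (fun x => ‖f x‖ₑ ^ p.toReal) y
      _ = ∫⁻ x, ‖f x‖ₑ ^ p.toReal ∂ν := by simp

/-- The Fourier multiplier whose symbol is the (rescaled) characteristic function of a finite
measure averages translates against that measure. -/
theorem fourierInv_charFun_mul {E : Type*} [NormedAddCommGroup E] [InnerProductSpace ℝ E]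
    [FiniteDimensional ℝ E] [MeasurableSpace E] [BorelSpace E]
    (μ : Measure E) [IsFiniteMeasure μ] {g : E → ℂ} (hg : Integrable g) (x : E) :
    𝓕⁻ (fun ξ => charFun μ ((2 * Real.pi) • ξ) * g ξ) x = ∫ y, 𝓕⁻ g (x + y) ∂μ := by
  simp only [Real.fourierInv_eq']
  have hintegrable : Integrable (fun q : E × E =>
      cexp (↑(2 * Real.pi * inner ℝ q.2 (x + q.1)) * I) • g q.2) (μ.prod volume) := by
    refine (hg.comp_snd μ).bdd_smul (𝕜 := ℂ) 1 ?_ (Filter.Eventually.of_forall fun q => ?_)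
    · exact (by fun_prop : Continuous fun q : E × E =>
        cexp (↑(2 * Real.pi * inner ℝ q.2 (x + q.1)) * I)).aestronglyMeasurable
    · rw [Complex.norm_exp_ofReal_mul_I]
  rw [integral_integral_swap hintegrable]
  refine integral_congr_ae (Filter.Eventually.of_forall fun ξ => ?_)
  simp only [smul_eq_mul, charFun_apply]
  rw [integral_mul_const, ← mul_assoc, ← integral_const_mul]
  congr 2
  ext y
  rw [← Complex.exp_add, inner_smul_right, inner_add_right, real_inner_comm ξ y]
  push_cast
  ring_nf

/-- The Laplace transform of the gamma distribution with rate one. -/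
theorem integral_exp_neg_mul_gammaMeasure {a : ℝ} (ha : 0 < a) {r : ℝ} (hr : 0 ≤ r) :
    ∫ u, Real.exp (-(r * u)) ∂ProbabilityTheory.gammaMeasure a 1 = (1 + r) ^ (-a) := by
  have hmeas : Measurable (ProbabilityTheory.gammaPDF a 1) :=
    (ProbabilityTheory.measurable_gammaPDFReal a 1).ennreal_ofReal
  rw [ProbabilityTheory.gammaMeasure, integral_withDensity_eq_integral_toReal_smul hmeas
    (Filter.Eventually.of_forall fun _ => ENNReal.ofReal_lt_top)]
  have h : ∀ u, (ProbabilityTheory.gammaPDF a 1 u).toReal • Real.exp (-(r * u)) =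
      (Set.Ici 0).indicator
        (fun u => (Real.Gamma a)⁻¹ * (u ^ (a - 1) * Real.exp (-((1 + r) * u)))) u := by
    intro u
    rw [ProbabilityTheory.gammaPDF, ENNReal.toReal_ofReal
      (ProbabilityTheory.gammaPDFReal_nonneg ha one_pos u), ProbabilityTheory.gammaPDFReal]
    by_cases hu : 0 ≤ u
    · rw [if_pos hu, Set.indicator_of_mem (Set.mem_Ici.2 hu),
        show -((1 + r) * u) = -(1 * u) + -(r * u) by ring, Real.exp_add]
      simp only [Real.one_rpow, smul_eq_mul]
      ring
    · simp [hu]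
  simp_rw [h]
  rw [integral_indicator measurableSet_Ici, integral_Ici_eq_integral_Ioi, integral_const_mul,
    Real.integral_rpow_mul_exp_neg_mul_Ioi ha (by positivity), one_div,
    Real.inv_rpow (by positivity), Real.rpow_neg (by positivity)]
  have := (Real.Gamma_pos_of_pos ha).ne'
  field_simp

/-- The Bessel symbol `(1 + ‖ξ‖²)^(-a)` is the characteristic function of a probability measure,
namely of a Gaussian vector with gamma-distributed variance. -/
theorem exists_isProbabilityMeasure_charFun_eq_one_add_norm_sq_rpow
    (E : Type*) [NormedAddCommGroup E] [InnerProductSpace ℝ E]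
    [FiniteDimensional ℝ E] [MeasurableSpace E] [BorelSpace E] {a : ℝ} (ha : 0 < a) :
    ∃ μ : Measure E, IsProbabilityMeasure μ ∧
      ∀ ξ, charFun μ ((2 * Real.pi) • ξ) = (((1 + ‖ξ‖ ^ 2) ^ (-a) : ℝ) : ℂ) := by
  have := ProbabilityTheory.isProbabilityMeasure_gammaMeasure ha one_pos
  have hscale : Measurable fun q : ℝ × E => (√(2 * q.1) / (2 * Real.pi)) • q.2 := by fun_prop
  refine ⟨((ProbabilityTheory.gammaMeasure a 1).prod
    (ProbabilityTheory.stdGaussian E)).map fun q => (√(2 * q.1) / (2 * Real.pi)) • q.2,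
    Measure.isProbabilityMeasure_map hscale.aemeasurable, fun ξ => ?_⟩
  have hnonneg : ∀ᵐ u ∂ProbabilityTheory.gammaMeasure a 1, 0 ≤ u := by
    refine (ae_withDensity_iff
      (ProbabilityTheory.measurable_gammaPDFReal a 1).ennreal_ofReal).2 ?_
    refine Filter.Eventually.of_forall fun u hu => ?_
    contrapose! hu
    exact ProbabilityTheory.gammaPDF_of_neg hu
  have hintegrable : Integrable (fun q : ℝ × E => cexp
      (inner ℝ ((√(2 * q.1) / (2 * Real.pi)) • q.2) ((2 * Real.pi) • ξ) * I))
      ((ProbabilityTheory.gammaMeasure a 1).prod (ProbabilityTheory.stdGaussian E)) := by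
    refine (integrable_const (1 : ℝ)).mono' (by fun_prop) (Filter.Eventually.of_forall fun q => ?_)
    rw [Complex.norm_exp_ofReal_mul_I]
  rw [charFun_apply, integral_map hscale.aemeasurable
    (by fun_prop), integral_prod _ hintegrable,
    ← integral_exp_neg_mul_gammaMeasure ha (sq_nonneg ‖ξ‖), ← integral_complex_ofReal]
  refine integral_congr_ae (hnonneg.mono fun u hu => ?_)
  have h := ProbabilityTheory.charFun_stdGaussian (E := E) (√(2 * u) • ξ)
  rw [charFun_apply] at h
  have hpi := Real.pi_ne_zero
  simp only [real_inner_smul_left, real_inner_smul_right] at h ⊢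
  simp_rw [show ∀ b : ℝ, 2 * Real.pi * (√(2 * u) / (2 * Real.pi) * b) = √(2 * u) * b by
    intro b; field_simp]
  rw [h, norm_smul, Real.norm_of_nonneg (Real.sqrt_nonneg _)]
  norm_cast
  rw [mul_pow, Real.sq_sqrt (by positivity)]
  ring_nf

/-- Monotonicity of the Bessel-potential seminorms: for `1 ≤ p ≤ ∞` and `0 ≤ s ≤ t`,
`‖J_{-s} φ‖_p ≤ C ‖J_{-t} φ‖_p` for all Schwartz `φ`. -/
theorem besselPotential_seminorm_mono (n : ℕ) (p : ℝ≥0∞) (hp : 1 ≤ p)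
    (s t : ℝ) (hs : 0 ≤ s) (hst : s ≤ t) :
    ∃ C : ℝ, 0 < C ∧ ∀ φ : 𝓢(EuclideanSpace ℝ (Fin n), ℂ),
      eLpNorm (besselPotential n (-(s : ℂ)) ⇑φ) p volume ≤
        ENNReal.ofReal C * eLpNorm (besselPotential n (-(t : ℂ)) ⇑φ) p volume := by
  refine ⟨1, one_pos, fun φ => ?_⟩
  rw [ENNReal.ofReal_one, one_mul]
  rcases hst.eq_or_lt with rfl | hlt
  · exact le_rfl
  obtain ⟨μ, hμ, hchar⟩ := exists_isProbabilityMeasure_charFun_eq_one_add_norm_sq_rpow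
    (EuclideanSpace ℝ (Fin n)) (a := (t - s) / 2) (by linarith)
  have hsymbol : ∀ (r : ℝ) (ξ : EuclideanSpace ℝ (Fin n)),
      ((1 : ℂ) + (‖ξ‖ : ℂ) ^ 2) ^ (-(-(r : ℂ)) / 2) = (((1 + ‖ξ‖ ^ 2) ^ (r / 2) : ℝ) : ℂ) := by
    intro r ξ
    rw [Complex.ofReal_cpow (by positivity)]
    push_cast
    ring_nf
  have hgrowth : (fun ξ : EuclideanSpace ℝ (Fin n) => (1 + ‖ξ‖ ^ 2) ^ (t / 2)).HasTemperateGrowth :=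
    Function.hasTemperateGrowth_one_add_norm_sq_rpow _ _
  set g : 𝓢(EuclideanSpace ℝ (Fin n), ℂ) := SchwartzMap.smulLeftCLM ℂ
    (fun ξ : EuclideanSpace ℝ (Fin n) => (1 + ‖ξ‖ ^ 2) ^ (t / 2)) (𝓕 φ) with hg
  have hgt : besselPotential n (-(t : ℂ)) φ = 𝓕⁻ (g : EuclideanSpace ℝ (Fin n) → ℂ) := by
    unfold besselPotential
    congr 1
    ext ξ
    rw [hsymbol, hg, SchwartzMap.smulLeftCLM_apply_apply hgrowth, Complex.real_smul,
      SchwartzMap.fourier_coe]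
  have hgs : besselPotential n (-(s : ℂ)) φ =
      fun x => ∫ y, 𝓕⁻ (g : EuclideanSpace ℝ (Fin n) → ℂ) (x + y) ∂μ := by
    ext x
    rw [← fourierInv_charFun_mul μ g.integrable]
    unfold besselPotential
    refine congrFun (congrArg _ (funext fun ξ => ?_)) x
    rw [hsymbol, hg, SchwartzMap.smulLeftCLM_apply_apply hgrowth, Complex.real_smul,
      SchwartzMap.fourier_coe, hchar, ← mul_assoc, ← Complex.ofReal_mul,
      ← Real.rpow_add (by positivity)]
    ring_nf
  rw [hgs, hgt]
  refine eLpNorm_integral_translate_le volume μ ?_ hp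
  rw [← SchwartzMap.fourierInv_coe]
  exact (𝓕⁻ g).continuous
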